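/- arXiv:1911.03467 — 3 statements merged into one kernel-verified Lean document; each statement's English description precedes it below -/
import Mathlib

section
/- Let C be a copula, let φ = φ(C) = 6·∫₀¹ C(u,u) du − 2 and β(C) = 4·C(1/2,1/2) − 1. Then φ ∈ [−1/2, 1], and β(C) ≥ 1 − 4·√((1−φ)/6); moreover β(C) is bounded above by 1 if 1/4 ≤ φ ≤ 1 and by −1 + 4·√((1+2φ)/6) if φ < 1/4. -/
/-- A (bivariate) copula: boundary conditions on `[0,1]` and the 2-increasing property. -/
def IsCopula (C : ℝ → ℝ → ℝ) : Prop :=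
  (∀ u ∈ Set.Icc (0:ℝ) 1, C u 0 = 0 ∧ C 0 u = 0 ∧ C u 1 = u ∧ C 1 u = u) ∧
  (∀ u₁ u₂ v₁ v₂ : ℝ, 0 ≤ u₁ → u₁ ≤ u₂ → u₂ ≤ 1 → 0 ≤ v₁ → v₁ ≤ v₂ → v₂ ≤ 1 →
    0 ≤ C u₁ v₁ + C u₂ v₂ - C u₁ v₂ - C u₂ v₁)

/-- Spearman's footrule of a copula. -/
noncomputable def footrule (C : ℝ → ℝ → ℝ) : ℝ :=
  6 * (∫ u in (0:ℝ)..1, C u u) - 2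

/-- Blomqvist's beta of a copula. -/
noncomputable def blomqvistBeta (C : ℝ → ℝ → ℝ) : ℝ :=
  4 * C (1/2) (1/2) - 1

theorem int_lin (a b p q : ℝ) :
    (∫ u in a..b, (p + q * u)) = p * (b - a) + q * ((b^2 - a^2) / 2) := by
  rw [intervalIntegral.integral_add (by simp) (Continuous.intervalIntegrable (by fun_prop) _ _),
    intervalIntegral.integral_const_mul, integral_id]
  simp
  ring

theorem int_le (f : ℝ → ℝ) (a b p q : ℝ) (hab : a ≤ b) (hf : IntervalIntegrable f MeasureTheory.volume a b)
    (h : ∀ u, a ≤ u → u ≤ b → f u ≤ p + q * u) :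
    (∫ u in a..b, f u) ≤ p * (b - a) + q * ((b^2 - a^2) / 2) := by
  rw [← int_lin]
  exact intervalIntegral.integral_mono_on hab hf
    (Continuous.intervalIntegrable (by fun_prop) _ _) (fun x hx => h x hx.1 hx.2)

theorem le_int (f : ℝ → ℝ) (a b p q : ℝ) (hab : a ≤ b) (hf : IntervalIntegrable f MeasureTheory.volume a b)
    (h : ∀ u, a ≤ u → u ≤ b → p + q * u ≤ f u) :
    p * (b - a) + q * ((b^2 - a^2) / 2) ≤ (∫ u in a..b, f u) := by
  rw [← int_lin]
  exact intervalIntegral.integral_mono_on hab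
    (Continuous.intervalIntegrable (by fun_prop) _ _) hf (fun x hx => h x hx.1 hx.2)

theorem diag_bounds (f : ℝ → ℝ) (h0 : f 0 = 0) (h1 : f 1 = 1) (hu : ∀ u, 0 ≤ u → u ≤ 1 → f u ≤ u)
    (hm : ∀ u v, 0 ≤ u → u ≤ v → v ≤ 1 → f u ≤ f v)
    (hl : ∀ u v, 0 ≤ u → u ≤ v → v ≤ 1 → f v - f u ≤ 2 * (v - u)) :
    (∫ u in (0:ℝ)..1, f u) ≤ 1/2 - (1/2 - f (1/2))^2 ∧
    1/4 + (f (1/2))^2 / 2 ≤ ∫ u in (0:ℝ)..1, f u := by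
  have hd0 : 0 ≤ f (1/2) := by
    have := hm 0 (1/2) (by norm_num) (by norm_num) (by norm_num)
    linarith
  have hd1 : f (1/2) ≤ 1/2 := hu _ (by norm_num) (by norm_num)
  have hi : ∀ a b, 0 ≤ a → a ≤ b → b ≤ 1 → IntervalIntegrable f MeasureTheory.volume a b := by
    intro a b ha hab hb
    apply MonotoneOn.intervalIntegrable
    rw [Set.uIcc_of_le hab]
    intro x hx y hy hxy
    exact hm x y (ha.trans hx.1) hxy (hy.2.trans hb)
  have split : ∀ s t, 0 ≤ s → s ≤ 1/2 → 1/2 ≤ t → t ≤ 1 → (∫ u in (0:ℝ)..1, f u) =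
      (∫ u in (0:ℝ)..s, f u) + (∫ u in s..(1/2), f u) + (∫ u in (1/2)..t, f u)
        + ∫ u in t..1, f u := by
    intro s t a b c e
    rw [intervalIntegral.integral_add_adjacent_intervals, 
      intervalIntegral.integral_add_adjacent_intervals,
      intervalIntegral.integral_add_adjacent_intervals] <;> apply hi <;> linarith
  generalize hd : f (1/2) = d at *
  constructor
  · rw [split d (1-d) (by linarith) (by linarith) (by linarith) (by linarith)]
    have A := int_le f 0 d 0 1 (by linarith) (hi _ _ (by linarith) (by linarith) (by linarith))
      (fun u a b => by linarith [hu u (by linarith) (by linarith)])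
    have B := int_le f d (1/2) d 0 (by linarith) (hi _ _ (by linarith) (by linarith) (by linarith))
      (fun u a b => by linarith [hm u (1/2) (by linarith) (by linarith) (by linarith)])
    have D := int_le f (1/2) (1-d) (d-1) 2 (by linarith) (hi _ _ (by linarith) (by linarith) (by linarith))
      (fun u a b => by linarith [hl (1/2) u (by linarith) (by linarith) (by linarith)])
    have E := int_le f (1-d) 1 0 1 (by linarith) (hi _ _ (by linarith) (by linarith) (by linarith))
      (fun u a b => by linarith [hu u (by linarith) (by linarith)])
    nlinarith
  · rw [split ((1-d)/2) ((1+d)/2) (by linarith) (by linarith) (by linarith) (by linarith)]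
    have A := le_int f 0 ((1-d)/2) 0 0 (by linarith) (hi _ _ (by linarith) (by linarith) (by linarith))
      (fun u a b => by linarith [hm 0 u (by linarith) (by linarith) (by linarith)])
    have B := le_int f ((1-d)/2) (1/2) (d-1) 2 (by linarith) (hi _ _ (by linarith) (by linarith) (by linarith))
      (fun u a b => by linarith [hl u (1/2) (by linarith) (by linarith) (by linarith)])
    have D := le_int f (1/2) ((1+d)/2) d 0 (by linarith) (hi _ _ (by linarith) (by linarith) (by linarith))
      (fun u a b => by linarith [hm (1/2) u (by linarith) (by linarith) (by linarith)])
    have E := le_int f ((1+d)/2) 1 (-1) 2 (by linarith) (hi _ _ (by linarith) (by linarith) (by linarith))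
      (fun u a b => by linarith [hl u 1 (by linarith) (by linarith) (by linarith)])
    nlinarith

/-- Bounds for Blomqvist's beta of a copula in terms of its Spearman's footrule `φ`;
moreover `φ ∈ [−1/2, 1]`. -/
theorem beta_bounds_of_footrule (C : ℝ → ℝ → ℝ) (hC : IsCopula C) :
    footrule C ∈ Set.Icc (-(1/2) : ℝ) 1 ∧
    1 - 4 * Real.sqrt ((1 - footrule C) / 6) ≤ blomqvistBeta C ∧
    blomqvistBeta C ≤
      (if (1/4 : ℝ) ≤ footrule C then (1 : ℝ)
      else -1 + 4 * Real.sqrt ((1 + 2 * footrule C) / 6)) := by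
  obtain ⟨hb, hr⟩ := hC
  have z : (0:ℝ) ∈ Set.Icc (0:ℝ) 1 := by simp
  have o : (1:ℝ) ∈ Set.Icc (0:ℝ) 1 := by simp
  have hu : ∀ u, 0 ≤ u → u ≤ 1 → C u u ≤ u := by
    intro u a b
    have := hr 0 u u 1 le_rfl a b a b le_rfl
    obtain ⟨_, h2, h3, _⟩ := hb u ⟨a, b⟩
    have := (hb 0 z).2.2.1
    linarith
  have hm : ∀ u v, 0 ≤ u → u ≤ v → v ≤ 1 → C u u ≤ C v v := by
    intro u v a b c
    have := hr u v 0 v a b c le_rfl (a.trans b) c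
    have := hr 0 u u v le_rfl a (b.trans c) a b c
    obtain ⟨_, h2, h3, _⟩ := hb u ⟨a, b.trans c⟩
    obtain ⟨_, h5, h6, _⟩ := hb v ⟨a.trans b, c⟩
    linarith
  have hl : ∀ u v, 0 ≤ u → u ≤ v → v ≤ 1 → C v v - C u u ≤ 2 * (v - u) := by
    intro u v a b c
    have := hr u v v 1 a b c (a.trans b) c le_rfl
    have := hr u 1 u v a (b.trans c) le_rfl a b c
    obtain ⟨_, h2, h3, h4⟩ := hb u ⟨a, b.trans c⟩
    obtain ⟨_, h5, h6, h7⟩ := hb v ⟨a.trans b, c⟩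
    linarith
  obtain ⟨U, L⟩ := diag_bounds (fun u => C u u) (hb 0 z).1 (hb 1 o).2.2.1 hu hm hl
  have hd := hu (1/2) (by norm_num) (by norm_num)
  unfold footrule blomqvistBeta
  generalize (∫ u in (0:ℝ)..1, C u u) = I at *
  generalize C (1/2) (1/2) = d at *
  refine ⟨⟨by nlinarith, by nlinarith⟩, ?_, ?_⟩
  · have : 1/2 - d ≤ Real.sqrt ((1 - (6 * I - 2)) / 6) := Real.le_sqrt_of_sq_le (by linarith)
    linarith
  · split_ifs
    · linarith
    · have : d ≤ Real.sqrt ((1 + 2 * (6 * I - 2)) / 6) := Real.le_sqrt_of_sq_le (by linarith)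
      linarith
end

section
/- Let t ∈ [−1,1]. Then Gini's gamma of the upper bound copula B̄_t equals γ(B̄_t) = 1 − (3/8)(1−t)²; explicitly, 4·∫₀¹ ( B̄_t(u,u) + B̄_t(u,1−u) ) du − 2 = 1 − (3/8)(1−t)². -/
/-- The upper bound copula `B̄_t` of the set of copulas with Blomqvist's beta equal to `t`. -/
noncomputable def Bupper (t u v : ℝ) : ℝ :=
  min (min u v) ((1 + t) / 4 + max (u - 1 / 2) 0 + max (v - 1 / 2) 0)

lemma piece_int (f : ℝ → ℝ) (p q c d : ℝ) (hpq : p ≤ q)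
    (h : ∀ x, p ≤ x → x ≤ q → f x = c + d * x) :
    ∫ x in p..q, f x = c * (q - p) + d * ((q ^ 2 - p ^ 2) / 2) := by
  have h1 : ∫ x in p..q, f x = ∫ x in p..q, (c + d * x) := by
    apply intervalIntegral.integral_congr
    intro x hx
    rw [Set.uIcc_of_le hpq] at hx
    exact h x hx.1 hx.2
  rw [h1, intervalIntegral.integral_add (by simp)
    (Continuous.intervalIntegrable (by fun_prop) _ _)]
  rw [intervalIntegral.integral_const_mul, integral_id, intervalIntegral.integral_const, smul_eq_mul]
  ring

/-- Gini's gamma of the upper bound copula `B̄_t` equals `1 − (3/8)(1−t)²`. -/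
theorem gamma_Bupper (t : ℝ) (ht : t ∈ Set.Icc (-1 : ℝ) 1) :
    4 * (∫ u in (0:ℝ)..1, (Bupper t u u + Bupper t u (1 - u))) - 2
      = 1 - 3 / 8 * (1 - t) ^ 2 := by
  obtain ⟨h1, h2⟩ := ht
  have hc : Continuous (fun u => Bupper t u u + Bupper t u (1 - u)) := by
    unfold Bupper
    fun_prop
  have hi : ∀ p q, IntervalIntegrable (fun u => Bupper t u u + Bupper t u (1 - u))
      MeasureTheory.volume p q := fun p q => hc.intervalIntegrable p q
  obtain ⟨a, rfl⟩ : ∃ a, t = 4 * a - 1 := ⟨(t + 1) / 4, by ring⟩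
  have i0 := piece_int (fun u => Bupper (4 * a - 1) u u + Bupper (4 * a - 1) u (1 - u)) 0 a 0 2 (by linarith) (by
    intro x hx hy
    simp only [Bupper]
    grind)
  have i1 := piece_int (fun u => Bupper (4 * a - 1) u u + Bupper (4 * a - 1) u (1 - u)) a (a/2+1/4) a 1 (by linarith) (by
    intro x hx hy
    simp only [Bupper]
    grind)
  have i2 := piece_int (fun u => Bupper (4 * a - 1) u u + Bupper (4 * a - 1) u (1 - u)) (a/2+1/4) (1/2) (2*a+1/2) (-1) (by linarith) (by
    intro x hx hy
    simp only [Bupper]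
    grind)
  have i3 := piece_int (fun u => Bupper (4 * a - 1) u u + Bupper (4 * a - 1) u (1 - u)) (1/2) (3/4-a/2) (2*a-3/2) 3 (by linarith) (by
    intro x hx hy
    simp only [Bupper]
    grind)
  have i4 := piece_int (fun u => Bupper (4 * a - 1) u u + Bupper (4 * a - 1) u (1 - u)) (3/4-a/2) (1-a) a 1 (by linarith) (by
    intro x hx hy
    simp only [Bupper]
    grind)
  have i5 := piece_int (fun u => Bupper (4 * a - 1) u u + Bupper (4 * a - 1) u (1 - u)) (1-a) 1 1 0 (by linarith) (by
    intro x hx hy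
    simp only [Bupper]
    grind)
  rw [← intervalIntegral.integral_add_adjacent_intervals (hi 0 a) (hi a 1)]
  rw [← intervalIntegral.integral_add_adjacent_intervals (hi a (a/2+1/4)) (hi (a/2+1/4) 1)]
  rw [← intervalIntegral.integral_add_adjacent_intervals (hi (a/2+1/4) (1/2)) (hi (1/2) 1)]
  rw [← intervalIntegral.integral_add_adjacent_intervals (hi (1/2) (3/4-a/2)) (hi (3/4-a/2) 1)]
  rw [← intervalIntegral.integral_add_adjacent_intervals (hi (3/4-a/2) (1-a)) (hi (1-a) 1)]
  rw [i0, i1, i2, i3, i4, i5]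
  ring
end

section
/- Let a, b ∈ [0,1] and 0 ≤ c ≤ min{a, b, 1−a, 1−b, |b−a|}, and set d₂ = min(a,b) − c. Then the concordance of the independence copula Π with C̄^{b,a,c} satisfies Q(Π, C̄^{b,a,c}) = 4·∫₀¹∫₀¹ C̄^{b,a,c}(u,v) du dv − 1 = 1/3 − 2(a+b−2d₂)(a−d₂)(b−d₂). -/
/-- The upper bound copula `C̄^{b,a,c}` of the asymmetry construction, where
`d₂ = min(a,b) − c`. -/
noncomputable def CUp (a b c u v : ℝ) : ℝ :=
  min (min u v)
    (max (max (min a b - c) (u - b + (min a b - c)))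
      (max (v - a + (min a b - c)) (u + v - a - b + (min a b - c))))

theorem int_pos_part (t : ℝ) (h0 : 0 ≤ t) (h1 : t ≤ 1) :
    ∫ v in (0:ℝ)..1, max (v - t) 0 = (1 - t) ^ 2 / 2 := by
  have hi : ∀ x y : ℝ, IntervalIntegrable (fun v : ℝ => max (v - t) 0) MeasureTheory.volume x y :=
    fun x y => (by fun_prop : Continuous (fun v : ℝ => max (v - t) 0)).intervalIntegrable x y
  rw [← intervalIntegral.integral_add_adjacent_intervals (hi 0 t) (hi t 1)]
  have e1 : ∫ v in (0:ℝ)..t, max (v - t) 0 = ∫ v in (0:ℝ)..t, (0:ℝ) := by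
    apply intervalIntegral.integral_congr
    intro v hv
    rw [Set.uIcc_of_le h0] at hv
    exact max_eq_right (by linarith [hv.2])
  have e2 : ∫ v in t..1, max (v - t) 0 = ∫ v in t..1, (v - t) := by
    apply intervalIntegral.integral_congr
    intro v hv
    rw [Set.uIcc_of_le h1] at hv
    exact max_eq_left (by linarith [hv.1])
  rw [e1, e2, intervalIntegral.integral_sub (by simp) (by simp)]
  simp
  ring

theorem int_comb (k l t0 t1 t2 t3 t4 c0 c1 c2 c3 c4 : ℝ)
    (h0 : t0 ∈ Set.Icc (0:ℝ) 1) (h1 : t1 ∈ Set.Icc (0:ℝ) 1) (h2 : t2 ∈ Set.Icc (0:ℝ) 1)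
    (h3 : t3 ∈ Set.Icc (0:ℝ) 1) (h4 : t4 ∈ Set.Icc (0:ℝ) 1) :
    ∫ v in (0:ℝ)..1, (k * v + l * v ^ 2 + c0 * max (v - t0) 0 + c1 * max (v - t1) 0
      + c2 * max (v - t2) 0 + c3 * max (v - t3) 0 + c4 * max (v - t4) 0)
    = k / 2 + l / 3 + (c0 * (1 - t0) ^ 2 + c1 * (1 - t1) ^ 2 + c2 * (1 - t2) ^ 2
      + c3 * (1 - t3) ^ 2 + c4 * (1 - t4) ^ 2) / 2 := by
  repeat rw [intervalIntegral.integral_add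
    (Continuous.intervalIntegrable (by fun_prop) _ _)
    (Continuous.intervalIntegrable (by fun_prop) _ _)]
  simp only [intervalIntegral.integral_const_mul]
  rw [int_pos_part t0 h0.1 h0.2, int_pos_part t1 h1.1 h1.2, int_pos_part t2 h2.1 h2.2,
    int_pos_part t3 h3.1 h3.2, int_pos_part t4 h4.1 h4.2]
  have hk : ∫ x in (0:ℝ)..1, k * x = k * (1 / 2) := by
    rw [intervalIntegral.integral_const_mul]; simp
  rw [hk]
  simp
  ring

theorem trap (p q w : ℝ) (hp : 0 ≤ p) (hq : 0 ≤ q) :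
    max (min p w - max (w - q) 0) 0
      = max w 0 - max (w - p) 0 - max (w - q) 0 + max (w - p - q) 0 := by
  rcases max_cases w 0 with h | h <;> rcases max_cases (w - p) 0 with h' | h' <;>
  rcases max_cases (w - q) 0 with h2 | h2 <;> rcases max_cases (w - p - q) 0 with h3 | h3 <;>
  rcases min_cases p w with h4 | h4 <;>
  rcases max_cases (min p w - max (w - q) 0) 0 with h5 | h5 <;> linarith

theorem CUp_eq (a b c d u v : ℝ) (hd : d = min a b - c) :
    CUp a b c u v = v - max (v - u) 0
      - max (min u v - (d + max (u - b) 0) - max (v - a) 0) 0 := by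
  have e : max (max d (u - b + d)) (max (v - a + d) (u + v - a - b + d))
      = d + max (u - b) 0 + max (v - a) 0 := by
    rcases le_total (u - b) 0 with h | h <;> rcases le_total (v - a) 0 with h' | h' <;>
    simp only [h, h', max_eq_left, max_eq_right] <;>
    apply le_antisymm <;> simp only [max_le_iff, le_max_iff]
    all_goals first
      | (refine ⟨⟨?_, ?_⟩, ?_, ?_⟩ <;> linarith)
      | exact Or.inl (Or.inl (by linarith))
      | exact Or.inl (Or.inr (by linarith))
      | exact Or.inr (Or.inl (by linarith))
      | exact Or.inr (Or.inr (by linarith))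
  unfold CUp
  rw [← hd, e]
  generalize max (u - b) 0 = x
  generalize max (v - a) 0 = y
  have e2 : v - max (v - u) 0 = min u v := by
    rcases le_total u v with h | h
    · rw [max_eq_left (by linarith), min_eq_left h]; ring
    · rw [max_eq_right (by linarith), min_eq_right h]; ring
  rw [e2]
  generalize min u v = m
  rcases le_total m (d + x + y) with h | h
  · rw [max_eq_right (by linarith), min_eq_left h]; ring
  · rw [max_eq_left (by linarith), min_eq_right h]; ring

theorem inner_aux (a b c d u s p q : ℝ) (hd : d = min a b - c) (hu : u ∈ Set.Icc (0:ℝ) 1)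
    (hs : 0 ≤ s) (hp : 0 ≤ p) (hq : 0 ≤ q) (h1 : s + p + q ≤ 1)
    (H : ∀ v ∈ Set.Icc (0:ℝ) 1, max (min u v - (d + max (u - b) 0) - max (v - a) 0) 0
      = max (min p (v - s) - max (v - s - q) 0) 0) :
    ∫ v in (0:ℝ)..1, CUp a b c u v = u - u ^ 2 / 2 - p * q := by
  have := int_comb 1 0 u s (s + p) (s + q) (s + p + q) (-1) (-1) 1 1 (-1) hu
    ⟨hs, by linarith⟩ ⟨by linarith, by linarith⟩ ⟨by linarith, by linarith⟩ ⟨by linarith, h1⟩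
  refine Eq.trans ?_ (this.trans (by ring))
  · apply intervalIntegral.integral_congr
    intro v hv
    rw [Set.uIcc_of_le zero_le_one] at hv
    simp only
    rw [CUp_eq a b c d u v hd, H v hv, trap p q _ hp hq]
    simp only [← sub_sub]
    ring

theorem inner_int (a b c d u : ℝ) (hd : d = min a b - c) (hu : u ∈ Set.Icc (0:ℝ) 1)
    (h0 : 0 ≤ d) (hda : d ≤ a) (hdb : d ≤ b) (h1 : a + b - d ≤ 1) :
    ∫ v in (0:ℝ)..1, CUp a b c u v = 1 * u + (-1/2) * u ^ 2 + (-(a - d)) * max (u - d) 0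
      + (a - d) * max (u - b) 0 + (b - d) * max (u - b) 0
      + (-(b - d)) * max (u - (a + b - d)) 0 + 0 * max (u - 0) 0 := by
  rcases le_total u d with h | h
  · rw [max_eq_right (by linarith : u - d ≤ 0), max_eq_right (by linarith : u - b ≤ 0),
      max_eq_right (by linarith : u - (a + b - d) ≤ 0),
      inner_aux a b c d u 0 0 0 hd hu le_rfl le_rfl le_rfl (by norm_num)]
    · ring
    intro v hv
    rw [max_eq_right, max_eq_right]
    · linarith [min_le_left 0 (v - 0), le_max_right (v - 0 - 0) 0]
    · linarith [min_le_left u v, le_max_right (u - b) 0, le_max_right (v - a) 0]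
  rcases le_total u b with h' | h'
  · rw [max_eq_left (by linarith : 0 ≤ u - d), max_eq_right (by linarith : u - b ≤ 0),
      max_eq_right (by linarith : u - (a + b - d) ≤ 0),
      inner_aux a b c d u d (u - d) (a - d) hd hu h0 (by linarith) (by linarith) (by linarith)]
    · ring
    intro v hv
    rw [max_eq_right (by linarith : u - b ≤ 0), min_sub_sub_right,
      show v - d - (a - d) = v - a by ring, add_zero]
  rcases le_total u (a + b - d) with h2 | h2
  · rw [max_eq_left (by linarith : 0 ≤ u - d), max_eq_left (by linarith : 0 ≤ u - b),
      max_eq_right (by linarith : u - (a + b - d) ≤ 0),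
      inner_aux a b c d u (d + (u - b)) (b - d) (a + b - d - u) hd hu (by linarith) (by linarith)
        (by linarith) (by linarith)]
    · ring
    intro v hv
    rw [max_eq_left (by linarith : 0 ≤ u - b), show b - d = u - (d + (u - b)) by ring,
      min_sub_sub_right, show v - (d + (u - b)) - (a + b - d - u) = v - a by ring]
  · rw [max_eq_left (by linarith : 0 ≤ u - d), max_eq_left (by linarith : 0 ≤ u - b),
      max_eq_left (by linarith : 0 ≤ u - (a + b - d)),
      inner_aux a b c d u 0 0 0 hd hu le_rfl le_rfl le_rfl (by norm_num)]
    · ring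
    intro v hv
    rw [max_eq_right, max_eq_right]
    · linarith [min_le_left 0 (v - 0), le_max_right (v - 0 - 0) 0]
    · linarith [min_le_right u v, le_max_left (u - b) 0, le_max_left (v - a) 0]

/-- `Q(Π, C̄^{b,a,c}) = 1/3 − 2(a+b−2d₂)(a−d₂)(b−d₂)`, where `Π` is the independence
copula whose induced measure is the Lebesgue measure on `[0,1]²`. -/
theorem Q_Pi_CUp (a b c : ℝ) (ha : a ∈ Set.Icc (0:ℝ) 1) (hb : b ∈ Set.Icc (0:ℝ) 1)
    (hc0 : 0 ≤ c)
    (hc : c ≤ min (min a b) (min (min (1 - a) (1 - b)) |b - a|))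
    (d₂ : ℝ) (hd : d₂ = min a b - c) :
    4 * (∫ u in (0:ℝ)..1, ∫ v in (0:ℝ)..1, CUp a b c u v) - 1
      = 1 / 3 - 2 * (a + b - 2 * d₂) * (a - d₂) * (b - d₂) := by
  simp only [le_min_iff] at hc
  obtain ⟨⟨hca, hcb⟩, ⟨hca1, hcb1⟩, -⟩ := hc
  have h0 : 0 ≤ d₂ := by rw [hd]; linarith [le_min hca hcb]
  have hda : d₂ ≤ a := by rw [hd]; linarith [min_le_left a b]
  have hdb : d₂ ≤ b := by rw [hd]; linarith [min_le_right a b]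
  have h1 : a + b - d₂ ≤ 1 := by
    rw [hd]; rcases min_cases a b with h | h <;> linarith
  have := int_comb 1 (-1/2) d₂ b b (a + b - d₂) 0 (-(a - d₂)) (a - d₂) (b - d₂) (-(b - d₂)) 0
    ⟨h0, by linarith [ha.2]⟩ hb hb ⟨by linarith [ha.1], h1⟩ ⟨le_rfl, zero_le_one⟩
  have e : (∫ u in (0:ℝ)..1, ∫ v in (0:ℝ)..1, CUp a b c u v) = _ :=
    (intervalIntegral.integral_congr (fun u hu => by
      rw [Set.uIcc_of_le zero_le_one] at hu
      exact inner_int a b c d₂ u hd hu h0 hda hdb h1)).trans this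
  rw [e]
  ring
end
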